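/- Let q be a prime power and n a positive integer with gcd(n,q)=1. Let δ ≥ 2 and let d be an integer with δ+1 ≤ d ≤ 2δ, and let r ≥ d-δ+1 be an integer such that (r+δ-1) divides gcd(n, q-1) and gcd(n/(r+δ-1), r+δ-1) = 1. Then there exists a q-ary cyclic code C of length n, dimension k = rn/(r+δ-1) - (d-δ), and minimum distance d, such that C has (r,δ)-locality and d = n - k + 1 - (⌈k/r⌉ - 1)(δ - 1) (i.e., C is an optimal (r,δ)-LRC achieving the Singleton-type bound). -/

import Mathlib

open Polynomial
open scoped Classical

/-- Hamming weight of a vector. -/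
noncomputable def wt {F : Type*} [Field F] {n : ℕ} (v : Fin n → F) : ℕ :=
  (Finset.univ.filter (fun i => v i ≠ 0)).card

/-- The minimum distance of the code `Cset` is at least `d`. -/
def MinDistGe {F : Type*} [Field F] {n : ℕ} (Cset : Set (Fin n → F)) (d : ℕ) : Prop :=
  ∀ v ∈ Cset, v ≠ 0 → d ≤ wt v

/-- The minimum distance of the code `Cset` is exactly `d`. -/
def MinDistIs {F : Type*} [Field F] {n : ℕ} (Cset : Set (Fin n → F)) (d : ℕ) : Prop :=
  MinDistGe Cset d ∧ ∃ v ∈ Cset, v ≠ 0 ∧ wt v = d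

/-- The code `Cset` has `(r, δ)`-locality: every coordinate `i` lies in a repair set `R`
of size at most `r + δ - 1` such that the code punctured to `R` has minimum distance `≥ δ`. -/
def HasLocality {F : Type*} [Field F] {n : ℕ} (Cset : Set (Fin n → F)) (r δ : ℕ) : Prop :=
  ∀ i : Fin n, ∃ R : Finset (Fin n), i ∈ R ∧ R.card ≤ r + δ - 1 ∧
    ∀ v ∈ Cset, (∃ j ∈ R, v j ≠ 0) → δ ≤ (R.filter (fun j => v j ≠ 0)).card

/-- A linear code is cyclic if it is closed under the cyclic shift
`(c_0, ..., c_{n-1}) ↦ (c_{n-1}, c_0, ..., c_{n-2})`. -/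
def IsCyclic' {F : Type*} [Field F] {n : ℕ} [NeZero n] (C : Submodule F (Fin n → F)) : Prop :=
  ∀ v ∈ C, (fun i : Fin n => v (i - 1)) ∈ C

/-- Singleton-type optimality for an `[n,k,d]` `(r,δ)`-LRC:
`d = n - k + 1 - (⌈k/r⌉ - 1)(δ - 1)`. -/
def IsOptimalParams (n k d r δ : ℕ) : Prop :=
  (d : ℤ) = (n : ℤ) - (k : ℤ) + 1 - (⌈(k : ℚ) / (r : ℚ)⌉ - 1) * ((δ : ℤ) - 1)

/-!
Write `l = r + δ - 1` and `n = m * l`, and let `γ = β ^ m` be a primitive `l`-th root of unity.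
The code is generated by `∏_{1 ≤ j < δ} (X ^ m - γ ^ j) * ∏_{δ ≤ j < d} (X - β ^ j)`.
Cut a codeword into `m` blocks according to the residue of the position mod `m`. Divisibility by
`X ^ m - γ ^ j` says that every block, read as a polynomial of degree `< l`, vanishes at `γ ^ j`.
So each block lies in a Reed–Solomon code of distance `δ`, which is the locality. A codeword with
two nonzero blocks has weight at least `2δ ≥ d`. If only one block is nonzero, then vanishing at
`β ^ j` again amounts to vanishing of that block at `γ ^ j`, now for all `1 ≤ j < d`, and the
weight is at least `d`. The word of `∏_{1 ≤ j < d} (X ^ m - γ ^ j)` attains `d`.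
-/

section PolyphaseComponents

variable {R : Type*} [CommRing R] {n m a : ℕ}

/-- Writing `p = ∑ a < m, X ^ a * pₐ(X ^ m)`, this is the value at `c` of the polyphase component
`pₐ`, as a linear functional of `p`. -/
noncomputable def polyphaseEval (m a : ℕ) (c : R) : R[X] →ₗ[R] R :=
  lsum fun i => if i % m = a then LinearMap.mulRight R (c ^ (i / m)) else 0

lemma polyphaseEval_monomial (m a : ℕ) (c : R) (i : ℕ) (b : R) :
    polyphaseEval m a c (monomial i b) = if i % m = a then b * c ^ (i / m) else 0 := by
  rw [polyphaseEval, lsum_apply, sum_monomial_index b _ (map_zero (_ : R →ₗ[R] R))]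
  split_ifs <;> simp

lemma polyphaseEval_X_pow_mul (hm : 0 < m) (a : ℕ) (c : R) (p : R[X]) :
    polyphaseEval m a c (X ^ m * p) = c * polyphaseEval m a c p := by
  induction p using Polynomial.induction_on' with
  | add p q hp hq => simp only [mul_add, map_add, hp, hq]
  | monomial i b =>
    rw [X_pow_mul_monomial, polyphaseEval_monomial, polyphaseEval_monomial, Nat.add_mod_right,
      Nat.add_div_right i hm, mul_ite, mul_zero, pow_succ', mul_left_comm]

lemma polyphaseEval_eq_zero_of_dvd (hm : 0 < m) (a : ℕ) {c : R} {p : R[X]}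
    (h : X ^ m - C c ∣ p) : polyphaseEval m a c p = 0 := by
  obtain ⟨q, rfl⟩ := h
  rw [sub_mul, map_sub, polyphaseEval_X_pow_mul hm, C_mul', map_smul, smul_eq_mul, sub_self]

lemma eval_eq_pow_mul_polyphaseEval {p : R[X]} (hp : ∀ i ∈ p.support, i % m = a) (x : R) :
    p.eval x = x ^ a * polyphaseEval m a (x ^ m) p := by
  rw [eval_eq_sum, polyphaseEval, lsum_apply, sum_def, sum_def, Finset.mul_sum]
  refine Finset.sum_congr rfl fun i hi => ?_
  have hpow : x ^ i = x ^ a * (x ^ m) ^ (i / m) := by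
    rw [← pow_mul, ← pow_add, ← hp i hi, Nat.mod_add_div]
  rw [if_pos (hp i hi), hpow, LinearMap.mulRight_apply, mul_left_comm]

/-- The positions congruent to `a` mod `m`; these are the repair sets of the code. -/
def residueBlock (n m a : ℕ) : Finset (Fin n) := {i | (i : ℕ) % m = a}

lemma mem_residueBlock {i : Fin n} : i ∈ residueBlock n m a ↔ (i : ℕ) % m = a :=
  Finset.mem_filter_univ i

lemma polyphaseEval_ofFn (m a : ℕ) (c : R) (v : Fin n → R) :
    polyphaseEval m a c (ofFn n v) = ∑ i ∈ residueBlock n m a, v i * c ^ ((i : ℕ) / m) := by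
  simp only [ofFn_eq_sum_monomial, map_sum, polyphaseEval_monomial, residueBlock,
    Finset.sum_filter]

lemma injOn_div_residueBlock :
    Set.InjOn (fun i : Fin n => (i : ℕ) / m) (residueBlock n m a) := by
  intro i hi j hj hij
  rw [Finset.mem_coe, mem_residueBlock] at hi hj
  exact Fin.ext (Nat.ext_div_mod hij (hi.trans hj.symm))

lemma card_residueBlock_le {l : ℕ} (hn : n ≤ m * l) : (residueBlock n m a).card ≤ l := by
  rw [← Finset.card_range l]
  refine Finset.card_le_card_of_injOn _ (fun i _ => ?_) injOn_div_residueBlock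
  exact Finset.mem_coe.2 (Finset.mem_range.2 (Nat.div_lt_of_lt_mul (i.2.trans_le hn)))

end PolyphaseComponents

section ReedSolomon

variable {R : Type*} [CommRing R]

/-- The generator polynomial of the Reed–Solomon code with zeros `γ ^ s, …, γ ^ (t - 1)`. -/
noncomputable def rsGenerator (γ : R) (s t : ℕ) : R[X] :=
  ∏ j ∈ Finset.Ico s t, (X - C (γ ^ j))

lemma rsGenerator_monic (γ : R) (s t : ℕ) : (rsGenerator γ s t).Monic :=
  monic_prod_X_sub_C _ _

lemma natDegree_rsGenerator [Nontrivial R] (γ : R) (s t : ℕ) :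
    (rsGenerator γ s t).natDegree = t - s := by
  rw [rsGenerator, natDegree_finsetProd_X_sub_C_eq_card, Nat.card_Ico]

lemma rsGenerator_mul_rsGenerator (γ : R) {s t u : ℕ} (hst : s ≤ t) (htu : t ≤ u) :
    rsGenerator γ s t * rsGenerator γ t u = rsGenerator γ s u :=
  Finset.prod_Ico_consecutive _ hst htu

lemma expand_rsGenerator (m : ℕ) (γ : R) (s t : ℕ) :
    expand R m (rsGenerator γ s t) = ∏ j ∈ Finset.Ico s t, (X ^ m - C (γ ^ j)) := by
  simp only [rsGenerator, map_prod, map_sub, expand_X, expand_C]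

lemma rsGenerator_dvd_expand (β : R) (m s t : ℕ) :
    rsGenerator β s t ∣ expand R m (rsGenerator (β ^ m) s t) := by
  rw [expand_rsGenerator]
  refine Finset.prod_dvd_prod_of_dvd _ _ fun j _ => ?_
  rw [pow_right_comm, C_pow (n := m)]
  exact sub_dvd_pow_sub_pow X (C (β ^ j)) m

lemma rsGenerator_dvd_X_pow_sub_one {F : Type*} [Field F] {γ : F} {l s t : ℕ}
    (hγ : IsPrimitiveRoot γ l) (hst : t ≤ s + l) : rsGenerator γ s t ∣ X ^ l - 1 := by
  refine Finset.prod_dvd_of_coprime (fun i hi j hj hij => ?_) fun j _ => ?_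
  · rw [Finset.coe_Ico, Set.mem_Ico] at hi hj
    refine isCoprime_X_sub_C_of_isUnit_sub (sub_ne_zero.2 fun h => hij ?_).isUnit
    have hmod : i ≡ j [MOD l] := by
      rwa [(hγ.isOfFinOrder (by omega)).pow_eq_pow_iff_modEq, ← hγ.eq_orderOf] at h
    exact hmod.eq_of_abs_lt (abs_lt.2 ⟨by omega, by omega⟩)
  · rw [dvd_iff_isRoot, IsRoot.def, eval_sub, eval_pow, eval_X, eval_one, pow_right_comm,
      hγ.pow_eq_one, one_pow, sub_self]

/-- The BCH bound. A shorter relation would be a vector in the kernel of a Vandermonde matrix with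
distinct nodes. -/
lemma sub_lt_card_support_of_power_sums_eq_zero [IsDomain R] {ι : Type*} {T : Finset ι}
    {w x : ι → R} {s t : ℕ} (hx : Set.InjOn x T) (hx0 : ∀ i ∈ T, x i ≠ 0)
    (hsum : ∀ j ∈ Finset.Ico s t, ∑ i ∈ T, w i * x i ^ j = 0) (hw : ∃ i ∈ T, w i ≠ 0) :
    t - s < (T.filter fun i => w i ≠ 0).card := by
  by_contra! hcard
  set S := T.filter fun i => w i ≠ 0
  let e : Fin S.card ≃ S := S.equivFin.symm
  have hST : ∀ i : S, (i : ι) ∈ T := fun i => (Finset.mem_filter.1 i.2).1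
  have hzero : (fun k => w (e k) * x (e k) ^ s) = 0 := by
    refine Matrix.eq_zero_of_forall_pow_sum_mul_pow_eq_zero (f := fun k => x (e k))
      (fun k k' h => e.injective (Subtype.ext (hx (hST _) (hST _) h))) fun j => ?_
    calc ∑ k, w (e k) * x (e k) ^ s * x (e k) ^ (j : ℕ)
        = ∑ i : S, w i * x i ^ (s + j) := by
          simp only [mul_assoc, ← pow_add]
          exact e.sum_comp fun i : S => w i * x i ^ (s + j : ℕ)
      _ = ∑ i ∈ S, w i * x i ^ (s + j) := Finset.sum_coe_sort S fun i => w i * x i ^ (s + j : ℕ)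
      _ = ∑ i ∈ T, w i * x i ^ (s + j) :=
          Finset.sum_filter_of_ne fun i _ => left_ne_zero_of_mul
      _ = 0 := hsum _ (Finset.mem_Ico.2 (by omega))
  obtain ⟨i, hiT, hi⟩ := hw
  have hiS : i ∈ S := Finset.mem_filter.2 ⟨hiT, hi⟩
  have hcoord := congrFun hzero (e.symm ⟨i, hiS⟩)
  simp only [Equiv.apply_symm_apply, Pi.zero_apply] at hcoord
  exact mul_ne_zero hi (pow_ne_zero _ (hx0 i hiT)) hcoord

end ReedSolomon

section PolynomialCodes

variable {F : Type*} [Field F] {n : ℕ}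

/-- The words of length `n` whose polynomial `∑ i, v i * X ^ i` is a multiple of `g`. -/
noncomputable def polyCode (n : ℕ) (g : F[X]) : Submodule F (Fin n → F) :=
  ((Ideal.span {g}).restrictScalars F).comap (ofFn n)

lemma mem_polyCode {g : F[X]} {v : Fin n → F} : v ∈ polyCode n g ↔ g ∣ ofFn n v :=
  Ideal.mem_span_singleton

lemma ofFn_toFn_of_degree_lt {p : F[X]} (hp : p.degree < n) : ofFn n (toFn n p) = p := by
  ext k
  rcases lt_or_ge k n with hk | hk
  · exact ofFn_coeff_eq_val_of_lt _ hk
  · rw [ofFn_coeff_eq_zero_of_ge _ hk, (degree_lt_iff_coeff_zero p n).1 hp k hk]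

lemma map_ofFn_polyCode {g : F[X]} (hg : g ≠ 0) :
    (polyCode n g).map (ofFn n) =
      (degreeLT F (n - g.natDegree)).map (LinearMap.mulLeft F g) := by
  have hdeg (p : F[X]) : (g * p).degree < n ↔ p.degree < (n - g.natDegree : ℕ) := by
    rcases eq_or_ne p 0 with rfl | hp
    · simp
    · rw [← natDegree_lt_iff_degree_lt (mul_ne_zero hg hp), ← natDegree_lt_iff_degree_lt hp,
        natDegree_mul hg hp]
      omega
  ext f
  simp only [Submodule.mem_map, mem_polyCode, mem_degreeLT, LinearMap.mulLeft_apply]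
  constructor
  · rintro ⟨v, ⟨p, hp⟩, rfl⟩
    exact ⟨p, (hdeg p).1 (hp ▸ ofFn_degree_lt v), hp.symm⟩
  · rintro ⟨p, hp, rfl⟩
    have hword := ofFn_toFn_of_degree_lt ((hdeg p).2 hp)
    exact ⟨_, (dvd_mul_right g p).trans hword.symm.dvd, hword⟩

lemma finrank_polyCode {g : F[X]} (hg : g ≠ 0) :
    Module.finrank F (polyCode n g) = n - g.natDegree :=
  calc Module.finrank F (polyCode n g)
      = Module.finrank F ((polyCode n g).map (ofFn n)) :=
        (Submodule.equivMapOfInjective _ (injective_ofFn n) _).finrank_eq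
    _ = Module.finrank F ((degreeLT F (n - g.natDegree)).map (LinearMap.mulLeft F g)) := by
        rw [map_ofFn_polyCode hg]
    _ = Module.finrank F (degreeLT F (n - g.natDegree)) :=
        (Submodule.equivMapOfInjective _ (mul_right_injective₀ hg) _).finrank_eq.symm
    _ = n - g.natDegree :=
        (degreeLTEquiv F _).finrank_eq.trans (Module.finrank_fin_fun F)

lemma ofFn_cyclicShift [NeZero n] (v : Fin n → F) :
    ofFn n (fun i => v (i - 1)) = X * ofFn n v - C (v (-1)) * (X ^ n - 1) := by
  obtain _ | m := n
  · exact absurd rfl (NeZero.ne 0)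
  have hlast : (-1 : Fin (m + 1)) = Fin.last m :=
    neg_eq_of_add_eq_zero_left (Fin.last_add_one m)
  have hsucc (i : Fin m) : i.succ - 1 = i.castSucc := by
    rw [sub_eq_iff_eq_add, Fin.coeSucc_eq_succ]
  rw [ofFn_eq_sum_monomial, ofFn_eq_sum_monomial, Fin.sum_univ_succ, Fin.sum_univ_castSucc]
  simp only [hsucc, zero_sub, hlast, mul_add, Finset.mul_sum, Fin.val_succ, Fin.val_castSucc,
    Fin.val_last, Fin.val_zero, X_mul_monomial, monomial_zero_left,
    ← C_mul_X_pow_eq_monomial (n := m + 1)]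
  ring

lemma isCyclic_polyCode [NeZero n] {g : F[X]} (hg : g ∣ X ^ n - 1) : IsCyclic' (polyCode n g) := by
  intro v hv
  rw [mem_polyCode] at hv ⊢
  rw [ofFn_cyclicShift]
  exact dvd_sub (hv.mul_left _) (hg.mul_left _)

lemma wt_eq_card_support_ofFn (v : Fin n → F) : wt v = (ofFn n v).support.card := by
  rw [wt, ← Finset.card_map Fin.valEmbedding]
  congr 1
  ext k
  rcases lt_or_ge k n with hk | hk
  · simp [ofFn_coeff_eq_val_of_lt v hk, Fin.exists_iff, hk]
  · simp [ofFn_coeff_eq_zero_of_ge v hk, Fin.exists_iff, hk]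

end PolynomialCodes

section BlockWeights

variable {F : Type*} [Field F] {n m l a s t : ℕ}

lemma sub_lt_card_filter_residueBlock {γ : F} {v : Fin n → F} (hγ : IsPrimitiveRoot γ l)
    (hn : n ≤ m * l)
    (hzero : ∀ j ∈ Finset.Ico s t, polyphaseEval m a (γ ^ j) (ofFn n v) = 0)
    (hv : ∃ i ∈ residueBlock n m a, v i ≠ 0) :
    t - s < ((residueBlock n m a).filter fun i => v i ≠ 0).card := by
  have hlt (i : Fin n) : (i : ℕ) / m < l := Nat.div_lt_of_lt_mul (i.2.trans_le hn)
  refine sub_lt_card_support_of_power_sums_eq_zero (x := fun i : Fin n => γ ^ ((i : ℕ) / m))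
    (fun i hi j hj hij => injOn_div_residueBlock hi hj (hγ.pow_inj (hlt i) (hlt j) hij))
    (fun i _ => pow_ne_zero _ (hγ.ne_zero (Nat.zero_lt_of_lt (hlt i)).ne')) (fun j hj => ?_) hv
  rw [← hzero j hj, polyphaseEval_ofFn]
  simp only [pow_right_comm]

lemma sub_lt_card_filter_residueBlock_of_expand_dvd {γ : F} {v : Fin n → F}
    (hγ : IsPrimitiveRoot γ l) (hn : n ≤ m * l)
    (hdvd : expand F m (rsGenerator γ s t) ∣ ofFn n v)
    (hv : ∃ i ∈ residueBlock n m a, v i ≠ 0) :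
    t - s < ((residueBlock n m a).filter fun i => v i ≠ 0).card := by
  refine sub_lt_card_filter_residueBlock hγ hn (fun j hj => ?_) hv
  rw [expand_rsGenerator] at hdvd
  obtain ⟨i, -⟩ := hv
  have hm : 0 < m := (CanonicallyOrderedAdd.mul_pos.1 (i.pos.trans_le hn)).1
  exact polyphaseEval_eq_zero_of_dvd hm a
    ((Finset.dvd_prod_of_mem (fun j => X ^ m - C (γ ^ j)) hj).trans hdvd)

lemma sub_lt_wt_of_rsGenerator_dvd {β : F} {v : Fin n → F} (hγ : IsPrimitiveRoot (β ^ m) l)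
    (hn : n ≤ m * l) (hdvd : rsGenerator β s t ∣ ofFn n v)
    (hsupp : ∀ i, v i ≠ 0 → i ∈ residueBlock n m a) (hv : v ≠ 0) : t - s < wt v := by
  obtain ⟨i, hi⟩ := Function.ne_iff.1 hv
  obtain ⟨hm, hl⟩ := CanonicallyOrderedAdd.mul_pos.1 (i.pos.trans_le hn)
  have hβ : β ≠ 0 := (pow_ne_zero_iff hm.ne').1 (hγ.ne_zero hl.ne')
  have hsupp' : ∀ k ∈ (ofFn n v).support, k % m = a := by
    intro k hk
    rw [mem_support_iff] at hk
    have hkn : k < n := lt_of_not_ge fun h => hk (ofFn_coeff_eq_zero_of_ge v h)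
    rw [ofFn_coeff_eq_val_of_lt v hkn] at hk
    exact mem_residueBlock.1 (hsupp ⟨k, hkn⟩ hk)
  refine (sub_lt_card_filter_residueBlock (a := a) hγ hn (fun j hj => ?_)
    ⟨i, hsupp i hi, hi⟩).trans_le
      (Finset.card_le_card (Finset.filter_subset_filter _ (Finset.subset_univ _)))
  have hroot : (ofFn n v).eval (β ^ j) = 0 :=
    dvd_iff_isRoot.1 ((Finset.dvd_prod_of_mem (fun j => X - C (β ^ j)) hj).trans hdvd)
  rw [eval_eq_pow_mul_polyphaseEval hsupp', pow_right_comm β j m] at hroot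
  exact (mul_eq_zero.1 hroot).resolve_left (pow_ne_zero _ (pow_ne_zero _ hβ))

lemma card_filter_residueBlock_add_le_wt {a b : ℕ} (hab : a ≠ b) (v : Fin n → F) :
    ((residueBlock n m a).filter fun i => v i ≠ 0).card +
      ((residueBlock n m b).filter fun i => v i ≠ 0).card ≤ wt v := by
  have hdisj : Disjoint (residueBlock n m a) (residueBlock n m b) :=
    Finset.disjoint_left.2 fun _ hi hj =>
      hab ((mem_residueBlock.1 hi).symm.trans (mem_residueBlock.1 hj))
  rw [← Finset.card_union_of_disjoint (Finset.disjoint_filter_filter hdisj),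
    ← Finset.filter_union]
  exact Finset.card_le_card (Finset.filter_subset_filter _ (Finset.subset_univ _))

end BlockWeights

lemma card_support_expand_le {R : Type*} [CommSemiring R] {m : ℕ} (hm : 0 < m) (p : R[X]) :
    (expand R m p).support.card ≤ p.support.card := by
  refine (Finset.card_le_card fun k hk => ?_).trans (Finset.card_image_le (f := (· * m)))
  rw [mem_support_iff, coeff_expand hm] at hk
  obtain ⟨hmk, hcoeff⟩ := ite_ne_right_iff.1 hk
  exact Finset.mem_image.2 ⟨k / m, mem_support_iff.2 hcoeff, Nat.div_mul_cancel hmk⟩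

section OptimalCode

variable {F : Type*} [Field F] {β : F} {n m l δ d : ℕ}

/-- The generator polynomial of the optimal code: the factors `X ^ m - β ^ (m * j)`, `1 ≤ j < δ`,
give the locality, and the zeros `β ^ j`, `δ ≤ j < d`, raise the weight of the codewords supported
on a single block to `d`. -/
noncomputable def lrcGenerator (β : F) (m δ d : ℕ) : F[X] :=
  expand F m (rsGenerator (β ^ m) 1 δ) * rsGenerator β δ d

lemma lrcGenerator_ne_zero (β : F) (hm : 0 < m) (δ d : ℕ) : lrcGenerator β m δ d ≠ 0 :=
  (((rsGenerator_monic _ _ _).expand hm).mul (rsGenerator_monic _ _ _)).ne_zero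

lemma natDegree_lrcGenerator (β : F) (hm : 0 < m) (δ d : ℕ) :
    (lrcGenerator β m δ d).natDegree = (δ - 1) * m + (d - δ) := by
  rw [lrcGenerator, ((rsGenerator_monic _ _ _).expand hm).natDegree_mul (rsGenerator_monic _ _ _),
    natDegree_expand, natDegree_rsGenerator, natDegree_rsGenerator]

lemma rsGenerator_dvd_lrcGenerator (β : F) (m : ℕ) (hδ : 1 ≤ δ) (hδd : δ ≤ d) :
    rsGenerator β 1 d ∣ lrcGenerator β m δ d := by
  rw [← rsGenerator_mul_rsGenerator β hδ hδd]
  exact mul_dvd_mul_right (rsGenerator_dvd_expand β m 1 δ) _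

lemma lrcGenerator_dvd_expand (β : F) (m : ℕ) (hδ : 1 ≤ δ) (hδd : δ ≤ d) :
    lrcGenerator β m δ d ∣ expand F m (rsGenerator (β ^ m) 1 d) := by
  rw [← rsGenerator_mul_rsGenerator (β ^ m) hδ hδd, map_mul]
  exact mul_dvd_mul_left _ (rsGenerator_dvd_expand β m δ d)

lemma lrcGenerator_dvd_X_pow_sub_one (hγ : IsPrimitiveRoot (β ^ m) l) (hδ : 1 ≤ δ) (hδd : δ ≤ d)
    (hdl : d ≤ l) : lrcGenerator β m δ d ∣ X ^ (m * l) - 1 := by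
  have h := map_dvd (expand F m)
    (rsGenerator_dvd_X_pow_sub_one (s := 1) (t := d) hγ (by omega))
  rw [map_sub, map_pow, expand_X, map_one, ← pow_mul] at h
  exact (lrcGenerator_dvd_expand β m hδ hδd).trans h

lemma le_card_filter_residueBlock (hγ : IsPrimitiveRoot (β ^ m) l) (hn : n ≤ m * l)
    {v : Fin n → F} (hv : v ∈ polyCode n (lrcGenerator β m δ d)) {a : ℕ}
    (ha : ∃ i ∈ residueBlock n m a, v i ≠ 0) :
    δ ≤ ((residueBlock n m a).filter fun i => v i ≠ 0).card := by
  have := sub_lt_card_filter_residueBlock_of_expand_dvd hγ hn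
    ((dvd_mul_right _ _).trans (mem_polyCode.1 hv)) ha
  omega

lemma hasLocality_polyCode_lrcGenerator {r : ℕ} (hγ : IsPrimitiveRoot (β ^ m) (r + δ - 1))
    (hn : n ≤ m * (r + δ - 1)) :
    HasLocality (polyCode n (lrcGenerator β m δ d) : Set (Fin n → F)) r δ := fun i =>
  ⟨residueBlock n m (i % m), mem_residueBlock.2 rfl, card_residueBlock_le hn,
    fun _ hv hne => le_card_filter_residueBlock hγ hn hv hne⟩

lemma minDistGe_polyCode_lrcGenerator (hγ : IsPrimitiveRoot (β ^ m) l)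
    (hn : n ≤ m * l) (hδ : 1 ≤ δ) (hδd : δ ≤ d) (hd : d ≤ 2 * δ) :
    MinDistGe (polyCode n (lrcGenerator β m δ d) : Set (Fin n → F)) d := by
  intro v hv hv0
  obtain ⟨i, hi⟩ := Function.ne_iff.1 hv0
  by_cases hsingle : ∀ j, v j ≠ 0 → j ∈ residueBlock n m (i % m)
  · have := sub_lt_wt_of_rsGenerator_dvd hγ hn
      ((rsGenerator_dvd_lrcGenerator β m hδ hδd).trans (mem_polyCode.1 hv)) hsingle hv0
    omega
  · push Not at hsingle
    obtain ⟨j, hj, hji⟩ := hsingle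
    have hblock (k : Fin n) (hk : v k ≠ 0) :=
      le_card_filter_residueBlock hγ hn hv ⟨k, mem_residueBlock.2 rfl, hk⟩
    calc d ≤ δ + δ := by omega
      _ ≤ _ := add_le_add (hblock i hi) (hblock j hj)
      _ ≤ wt v := card_filter_residueBlock_add_le_wt
        (fun hij => hji (mem_residueBlock.2 hij.symm)) v

lemma exists_mem_polyCode_wt_le (hm : 0 < m) (hδ : 1 ≤ δ) (hδd : δ ≤ d) (hn : (d - 1) * m < n) :
    ∃ v ∈ polyCode n (lrcGenerator β m δ d), v ≠ 0 ∧ wt v ≤ d := by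
  set P := rsGenerator (β ^ m) 1 d
  have hP : P.natDegree = d - 1 := natDegree_rsGenerator _ _ _
  have hne : expand F m P ≠ 0 := ((rsGenerator_monic _ _ _).expand hm).ne_zero
  have hword : ofFn n (toFn n (expand F m P)) = expand F m P := by
    refine ofFn_comp_toFn_eq_id_of_natDegree_lt ?_
    rwa [natDegree_expand, hP]
  refine ⟨toFn n (expand F m P), ?_, fun h => hne ?_, ?_⟩
  · rw [mem_polyCode, hword]
    exact lrcGenerator_dvd_expand β m hδ hδd
  · rw [← hword, h, map_zero]
  · calc wt _ = (expand F m P).support.card := by rw [wt_eq_card_support_ofFn, hword]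
      _ ≤ P.support.card := card_support_expand_le hm P
      _ ≤ P.natDegree + 1 := card_supp_le_succ_natDegree P
      _ = d := by omega

lemma minDistIs_polyCode_lrcGenerator (hγ : IsPrimitiveRoot (β ^ m) l) (hm : 0 < m)
    (hn : n = m * l) (hδ : 1 ≤ δ) (hδd : δ ≤ d) (hd : d ≤ 2 * δ) (hdl : d ≤ l) :
    MinDistIs (polyCode n (lrcGenerator β m δ d) : Set (Fin n → F)) d := by
  have hge := minDistGe_polyCode_lrcGenerator hγ hn.le hδ hδd hd
  have hlt : (d - 1) * m < n := by
    rw [hn, mul_comm]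
    exact Nat.mul_lt_mul_of_pos_left (by omega) hm
  obtain ⟨v, hv, hv0, hwt⟩ := exists_mem_polyCode_wt_le (β := β) hm hδ hδd hlt
  exact ⟨hge, v, hv, hv0, hwt.antisymm (hge v hv hv0)⟩

end OptimalCode

lemma ceil_mul_sub_div_eq {K : Type*} [Field K] [LinearOrder K] [IsStrictOrderedRing K]
    [FloorRing K] {r e : K} (he : 0 ≤ e) (her : e < r) (m : ℤ) : ⌈(r * m - e) / r⌉ = m := by
  have hr : 0 < r := he.trans_lt her
  rw [Int.ceil_eq_iff, lt_div_iff₀ hr, div_le_iff₀ hr]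
  constructor <;> linarith

lemma isOptimalParams_mul {m r δ d : ℕ} (hm : 0 < m) (hδ : 1 ≤ δ) (hδd : δ ≤ d)
    (hr : d - δ < r) : IsOptimalParams (m * (r + δ - 1)) (r * m - (d - δ)) d r δ := by
  have hle : d - δ ≤ r * m := hr.le.trans (Nat.le_mul_of_pos_right r hm)
  have hceil : ⌈((r * m - (d - δ) : ℕ) : ℚ) / r⌉ = m := by
    rw [Nat.cast_sub hle, Nat.cast_mul]
    exact ceil_mul_sub_div_eq (Nat.cast_nonneg _) (Nat.cast_lt.2 hr) m
  rw [IsOptimalParams, hceil, Nat.cast_sub hle, Nat.cast_sub hδd, Nat.cast_mul,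
    Nat.cast_sub (by omega)]
  push_cast
  ring

lemma exists_isPrimitiveRoot_of_dvd_card_sub_one {F : Type*} [Field F] [Fintype F] {l : ℕ}
    (hl : l ∣ Fintype.card F - 1) : ∃ β : F, IsPrimitiveRoot β l := by
  obtain ⟨u, hu⟩ := IsCyclic.exists_ofOrder_eq_natCard (α := Fˣ)
  obtain ⟨e, he⟩ := hl
  have hprim : IsPrimitiveRoot u (Fintype.card F - 1) := by
    rw [← Fintype.card_units, ← Nat.card_eq_fintype_card, ← hu]
    exact .orderOf u
  have hpos : 0 < Fintype.card F - 1 := Nat.sub_pos_of_lt Fintype.one_lt_card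
  exact ⟨_, (hprim.pow hpos (he.trans (mul_comm _ _))).map_of_injective Units.coeHom_injective⟩

/-- For `β` one can take a primitive `n`-th root of unity, or a primitive `(r + δ - 1)`-th root of
unity if `r + δ - 1` is coprime to `n / (r + δ - 1)`. -/
theorem exists_optimal_cyclic_LRC_dist_between_general {F : Type*} [Field F] {β : F}
    {n r δ d : ℕ} [NeZero n] (hδ : 1 ≤ δ) (hd1 : δ ≤ d) (hd2 : d ≤ 2 * δ) (hr : d - δ < r)
    (hdvd : r + δ - 1 ∣ n) (hβ : IsPrimitiveRoot (β ^ (n / (r + δ - 1))) (r + δ - 1)) :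
    ∃ C : Submodule F (Fin n → F),
      IsCyclic' C ∧
      Module.finrank F C = r * n / (r + δ - 1) - (d - δ) ∧
      MinDistIs (C : Set (Fin n → F)) d ∧
      HasLocality (C : Set (Fin n → F)) r δ ∧
      IsOptimalParams n (r * n / (r + δ - 1) - (d - δ)) d r δ := by
  have hl : 0 < r + δ - 1 := by omega
  obtain ⟨m, rfl⟩ := exists_eq_mul_left_of_dvd hdvd
  have hm : 0 < m := Nat.pos_of_ne_zero (left_ne_zero_of_mul (NeZero.ne (m * (r + δ - 1))))
  have hsplit : m * (r + δ - 1) = r * m + (δ - 1) * m := by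
    rw [← add_mul, ← Nat.add_sub_assoc hδ, mul_comm]
  rw [Nat.mul_div_cancel m hl] at hβ
  rw [Nat.mul_div_assoc r hdvd, Nat.mul_div_cancel m hl]
  refine ⟨polyCode _ (lrcGenerator β m δ d), isCyclic_polyCode ?_, ?_,
    minDistIs_polyCode_lrcGenerator hβ hm rfl hδ hd1 hd2 (by omega),
    hasLocality_polyCode_lrcGenerator hβ le_rfl, isOptimalParams_mul hm hδ hd1 hr⟩
  · exact lrcGenerator_dvd_X_pow_sub_one hβ hδ hd1 (by omega)
  · rw [finrank_polyCode (lrcGenerator_ne_zero β hm δ d), natDegree_lrcGenerator β hm]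
    omega

/-- **Remark 3.** For any `δ + 1 ≤ d ≤ 2δ` and `r ≥ d - δ + 1`, if `gcd(n,q) = 1`,
`(r+δ-1) ∣ gcd(n, q-1)` and `gcd(n/(r+δ-1), r+δ-1) = 1`, then there exists a `q`-ary
optimal cyclic `(r,δ)`-LRC of length `n`, dimension `k = rn/(r+δ-1) - (d-δ)` and minimum
distance `d`, achieving the Singleton-type bound. -/
theorem exists_optimal_cyclic_LRC_dist_between (F : Type*) [Field F] [Fintype F]
    (q n r δ d : ℕ) (hq : Fintype.card F = q) [NeZero n] (hcop : Nat.Coprime n q)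
    (hδ : 2 ≤ δ) (hd1 : δ + 1 ≤ d) (hd2 : d ≤ 2 * δ) (hr : d - δ + 1 ≤ r)
    (hdvd : (r + δ - 1) ∣ Nat.gcd n (q - 1))
    (hgcd : Nat.gcd (n / (r + δ - 1)) (r + δ - 1) = 1) :
    ∃ C : Submodule F (Fin n → F),
      IsCyclic' C ∧
      Module.finrank F C = r * n / (r + δ - 1) - (d - δ) ∧
      MinDistIs (C : Set (Fin n → F)) d ∧
      HasLocality (C : Set (Fin n → F)) r δ ∧
      IsOptimalParams n (r * n / (r + δ - 1) - (d - δ)) d r δ := by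
  obtain ⟨β, hβ⟩ := exists_isPrimitiveRoot_of_dvd_card_sub_one
    (hq ▸ hdvd.trans (Nat.gcd_dvd_right n (q - 1)))
  exact exists_optimal_cyclic_LRC_dist_between_general (by omega) (by omega) hd2 (by omega)
    (hdvd.trans (Nat.gcd_dvd_left _ _)) (hβ.pow_of_coprime _ hgcd)
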